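/- arXiv:1007.2036 — 2 statements merged into one kernel-verified Lean document; each statement's English description precedes it below -/
import Mathlib

section
/- Let D, D′ ⊂ ℝ^{2n+1} be bounded open sets and let F : cl(D) → cl(D′) be a smooth diffeomorphism onto cl(D′) whose restriction to D is a contact diffeomorphism onto D′. Then for every integer s ≥ 0 there exists a constant C > 0 such that for every smooth function f : cl(D′) → ℝ^m one has ‖f ∘ F‖_{D,s} ≤ C ‖f‖_{D′,s}. -/
open MeasureTheory Bornology

noncomputable section

variable {E : Type*} [NormedAddCommGroup E] [NormedSpace ℝ E]

/-- The standard contact form `η₀ = dx^{2n+1} - Σ x^{n+j} dx^j` on `ℝ^{2n+1}`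
(0-indexed coordinates): `η₀(x)(v) = v_{2n} - Σ_{j<n} x_{n+j} v_j`. -/
def eta0 (n : ℕ) (x v : Fin (2*n+1) → ℝ) : ℝ :=
  v ⟨2*n, by omega⟩ -
    ∑ j : Fin n, x ⟨n + j, by have := j.2; omega⟩ * v ⟨j, by have := j.2; omega⟩

/-- `dη₀ = Σ_{j<n} dx^j ∧ dx^{n+j}`. -/
def dEta0 (n : ℕ) (u v : Fin (2*n+1) → ℝ) : ℝ :=
  ∑ j : Fin n,
    (u ⟨j, by have := j.2; omega⟩ * v ⟨n + j, by have := j.2; omega⟩ -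
     u ⟨n + j, by have := j.2; omega⟩ * v ⟨j, by have := j.2; omega⟩)

/-- The horizontal vector fields: for `j < n`, `X_j = ∂_j + x_{n+j} ∂_{2n}`;
for `n ≤ j < 2n`, `X_j = ∂_j` (0-indexed). -/
def Xvec (n : ℕ) (j : Fin (2*n)) (x : Fin (2*n+1) → ℝ) : Fin (2*n+1) → ℝ :=
  if h : (j : ℕ) < n then
    (Pi.single (⟨j, by omega⟩ : Fin (2*n+1)) 1 : Fin (2*n+1) → ℝ)
      + x ⟨n + j, by omega⟩ • (Pi.single (⟨2*n, by omega⟩ : Fin (2*n+1)) 1 : Fin (2*n+1) → ℝ)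
  else
    (Pi.single (⟨j, by have := j.2; omega⟩ : Fin (2*n+1)) 1 : Fin (2*n+1) → ℝ)

/-- The horizontal derivative `X_j f`. -/
def hDeriv (n : ℕ) (j : Fin (2*n)) (f : (Fin (2*n+1) → ℝ) → E)
    (x : Fin (2*n+1) → ℝ) : E :=
  fderiv ℝ f x (Xvec n j x)

/-- Iterated horizontal derivative `X_I f = X_{i₁} ⋯ X_{i_t} f`. -/
def XI (n : ℕ) : List (Fin (2*n)) → ((Fin (2*n+1) → ℝ) → E) → ((Fin (2*n+1) → ℝ) → E)
  | [], f => f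
  | j :: I, f => hDeriv n j (XI n I f)

/-- Squared Folland–Stein norm `‖f‖_{D,s}² = Σ_{|I| ≤ s} ∫_D ‖X_I f‖²`. -/
def fsNormSq (n : ℕ) (D : Set (Fin (2*n+1) → ℝ)) (s : ℕ)
    (f : (Fin (2*n+1) → ℝ) → E) : ℝ :=
  ∑ t ∈ Finset.range (s+1), ∑ I : Fin t → Fin (2*n),
    ∫ x in D, ‖XI n (List.ofFn I) f x‖^2

/-- The Folland–Stein norm `‖f‖_{D,s}`. -/
def fsNorm (n : ℕ) (D : Set (Fin (2*n+1) → ℝ)) (s : ℕ)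
    (f : (Fin (2*n+1) → ℝ) → E) : ℝ :=
  Real.sqrt (fsNormSq n D s f)

/-- Ordinary partial derivative `∂_i f`. -/
def pDeriv (n : ℕ) (i : Fin (2*n+1)) (f : (Fin (2*n+1) → ℝ) → E)
    (x : Fin (2*n+1) → ℝ) : E :=
  fderiv ℝ f x (Pi.single i 1 : Fin (2*n+1) → ℝ)

/-- Iterated ordinary partial derivative. -/
def pI (n : ℕ) : List (Fin (2*n+1)) → ((Fin (2*n+1) → ℝ) → E) → ((Fin (2*n+1) → ℝ) → E)
  | [], f => f
  | i :: I, f => pDeriv n i (pI n I f)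

/-- The Reeb derivative `T₀ f = ∂_{2n} f` (0-indexed). -/
def T0Deriv (n : ℕ) (f : (Fin (2*n+1) → ℝ) → E) (x : Fin (2*n+1) → ℝ) : E :=
  fderiv ℝ f x (Pi.single (⟨2*n, by omega⟩ : Fin (2*n+1)) 1 : Fin (2*n+1) → ℝ)

/-- `X` is a contact vector field on `D`:  `dη₀(X, X_j) + X_j(η₀(X)) = 0` for all
horizontal `X_j`. -/
def IsContactVF (n : ℕ) (D : Set (Fin (2*n+1) → ℝ))
    (X : (Fin (2*n+1) → ℝ) → (Fin (2*n+1) → ℝ)) : Prop :=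
  ∀ j : Fin (2*n), ∀ x ∈ D,
    dEta0 n (X x) (Xvec n j x) + hDeriv n j (fun y => eta0 n y (X y)) x = 0

/-- The contact vector field with generating function `g`:
`X_g = g T₀ + Σ_j (-(X_{n+j} g) X_j + (X_j g) X_{n+j})`. -/
def genVF (n : ℕ) (g : (Fin (2*n+1) → ℝ) → ℝ) (x : Fin (2*n+1) → ℝ) :
    Fin (2*n+1) → ℝ :=
  g x • (Pi.single (⟨2*n, by omega⟩ : Fin (2*n+1)) 1 : Fin (2*n+1) → ℝ)
  + ∑ j : Fin n,
      (-(hDeriv n (⟨n + j, by have := j.2; omega⟩ : Fin (2*n)) g x) •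
          Xvec n (⟨j, by have := j.2; omega⟩ : Fin (2*n)) x
        + (hDeriv n (⟨j, by have := j.2; omega⟩ : Fin (2*n)) g x) •
          Xvec n (⟨n + j, by have := j.2; omega⟩ : Fin (2*n)) x)


section helpers
open Topology Filter

/-- Smooth on `D`, with all derivatives locally extending continuously to the closure. -/
def QQ {V : Type*} [NormedAddCommGroup V] [NormedSpace ℝ V] {W : Type*} [NormedAddCommGroup W]
    [NormedSpace ℝ W] (D : Set V) (a : V → W) : Prop :=
  ∀ x ∈ closure D, ∀ k : ℕ, ∃ b : V → W, a =ᶠ[𝓝[D] x] b ∧ ContDiffWithinAt ℝ k b D x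

variable {V : Type*} [NormedAddCommGroup V] [NormedSpace ℝ V]
  {W : Type*} [NormedAddCommGroup W] [NormedSpace ℝ W]
  {W' : Type*} [NormedAddCommGroup W'] [NormedSpace ℝ W'] {D : Set V}

theorem QQ.of_contDiffOn {a : V → W} (h : ContDiffOn ℝ (⊤:ℕ∞) a (closure D)) : QQ D a := by
  intro x hx k
  refine ⟨a, EventuallyEq.rfl, ?_⟩
  exact ((h x hx).mono subset_closure).of_le (by exact_mod_cast le_top)

theorem QQ.of_contDiff {a : V → W} (h : ContDiff ℝ (⊤:ℕ∞) a) : QQ D a :=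
  QQ.of_contDiffOn h.contDiffOn

theorem QQ.add {a b : V → W} (ha : QQ D a) (hb : QQ D b) : QQ D (fun x => a x + b x) := by
  intro x hx k
  obtain ⟨a', h1, h2⟩ := ha x hx k
  obtain ⟨b', h3, h4⟩ := hb x hx k
  exact ⟨fun x => a' x + b' x, h1.add h3, h2.add h4⟩

theorem QQ.smul {a : V → ℝ} {b : V → W} (ha : QQ D a) (hb : QQ D b) :
    QQ D (fun x => a x • b x) := by
  intro x hx k
  obtain ⟨a', h1, h2⟩ := ha x hx k
  obtain ⟨b', h3, h4⟩ := hb x hx k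
  exact ⟨fun x => a' x • b' x, h1.smul h3, h2.smul h4⟩

theorem QQ.clm_apply {a : V → W →L[ℝ] W'} {b : V → W} (ha : QQ D a) (hb : QQ D b) :
    QQ D (fun x => a x (b x)) := by
  intro x hx k
  obtain ⟨a', h1, h2⟩ := ha x hx k
  obtain ⟨b', h3, h4⟩ := hb x hx k
  refine ⟨fun x => a' x (b' x), ?_, h2.clm_apply h4⟩
  filter_upwards [h1, h3] with y hy hy'
  rw [hy, hy']

theorem QQ.clm_comp {a : V → W} (L : W →L[ℝ] W') (ha : QQ D a) :
    QQ D (fun x => L (a x)) :=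
  QQ.clm_apply (QQ.of_contDiff contDiff_const) ha

theorem QQ.fderiv (hD : IsOpen D) {a : V → W} (ha : QQ D a) : QQ D (fderiv ℝ a) := by
  intro x hx k
  obtain ⟨b, h1, h2⟩ := ha x hx (k+1)
  obtain ⟨u, hu, -, f', hf', hc⟩ := (contDiffWithinAt_succ_iff_hasFDerivWithinAt (n := (k : WithTop ℕ∞))
    (by simp)).1 (by exact_mod_cast h2)
  have hu' : u ∈ 𝓝[D] x := nhdsWithin_mono _ (Set.subset_insert _ _) hu
  refine ⟨f', ?_, hc.mono_of_mem_nhdsWithin hu'⟩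
  have e1 := eventually_eventually_nhdsWithin.2 h1
  have e2 := eventually_eventually_nhdsWithin.2 (show ∀ᶠ y in 𝓝[D] x, y ∈ u from hu')
  filter_upwards [e1, e2, self_mem_nhdsWithin] with y hy1 hy2 hyD
  rw [hD.nhdsWithin_eq hyD] at hy1 hy2
  have hyu : y ∈ u := hy2.self_of_nhds
  rw [EventuallyEq.fderiv_eq hy1]
  exact ((hf' y hyu).hasFDerivAt hy2).fderiv

theorem QQ.contDiffAt (hD : IsOpen D) {a : V → W} (ha : QQ D a) {x : V} (hx : x ∈ D) (k : ℕ) :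
    ContDiffAt ℝ k a x := by
  obtain ⟨b, h1, h2⟩ := ha x (subset_closure hx) k
  rw [hD.nhdsWithin_eq hx] at h1
  exact (h2.contDiffAt (hD.mem_nhds hx)).congr_of_eventuallyEq h1

theorem QQ.differentiableAt (hD : IsOpen D) {a : V → W} (ha : QQ D a) {x : V} (hx : x ∈ D) :
    DifferentiableAt ℝ a x :=
  (ha.contDiffAt hD hx 1).differentiableAt (by simp)

theorem QQ.continuousOn (hD : IsOpen D) {a : V → W} (ha : QQ D a) : ContinuousOn a D :=
  fun _ hx => (ha.differentiableAt hD hx).continuousAt.continuousWithinAt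

theorem QQ.bounded [ProperSpace V] (hDb : IsBounded D) {a : V → W} (ha : QQ D a) :
    ∃ C, 0 ≤ C ∧ ∀ x ∈ D, ‖a x‖ ≤ C := by
  have hK : IsCompact (closure D) := hDb.isCompact_closure
  have : ∃ C : ℝ, ∀ x ∈ closure D ∩ D, ‖a x‖ ≤ C := by
    refine hK.induction_on (p := fun s => ∃ C : ℝ, ∀ x ∈ s ∩ D, ‖a x‖ ≤ C) ⟨0, by simp⟩ ?_ ?_ ?_
    · rintro s t hst ⟨C, hC⟩
      exact ⟨C, fun x hx => hC x ⟨hst hx.1, hx.2⟩⟩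
    · rintro s t ⟨C, hC⟩ ⟨C', hC'⟩
      refine ⟨max C C', ?_⟩
      rintro x ⟨hx | hx, hxD⟩
      · exact (hC x ⟨hx, hxD⟩).trans (le_max_left _ _)
      · exact (hC' x ⟨hx, hxD⟩).trans (le_max_right _ _)
    · intro x hx
      obtain ⟨b, h1, h2⟩ := ha x hx 0
      have hb : ∀ᶠ y in 𝓝[D] x, ‖b y‖ < ‖b x‖ + 1 :=
        (h2.continuousWithinAt.norm).eventually (gt_mem_nhds (by linarith))
      have : ∀ᶠ y in 𝓝[D] x, ‖a y‖ ≤ ‖b x‖ + 1 := by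
        filter_upwards [h1, hb] with y hy hy'
        rw [hy]; exact hy'.le
      rw [eventually_nhdsWithin_iff] at this
      exact ⟨_, mem_nhdsWithin_of_mem_nhds this, ‖b x‖ + 1, fun y hy => hy.1 hy.2⟩
  obtain ⟨C, hC⟩ := this
  exact ⟨max C 0, le_max_right _ _, fun x hx => (hC x ⟨subset_closure hx, hx⟩).trans (le_max_left _ _)⟩

theorem QQ.integrableOn [ProperSpace V] [MeasureSpace V] [BorelSpace V]
    [SecondCountableTopology V] [IsFiniteMeasureOnCompacts (volume : Measure V)]
    (hD : IsOpen D) (hDb : IsBounded D) {a : V → W} (ha : QQ D a) :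
    IntegrableOn (fun x => ‖a x‖^2) D := by
  obtain ⟨C, hC0, hC⟩ := ha.bounded hDb
  have hfin : volume D < ⊤ := hDb.measure_lt_top
  refine IntegrableOn.of_bound (C := C^2) hfin ?_ ?_
  · exact ((ha.continuousOn hD).norm.pow 2).aestronglyMeasurable hD.measurableSet
  · refine (ae_restrict_iff' hD.measurableSet).2 (Eventually.of_forall fun x hx => ?_)
    have := hC x hx
    rw [Real.norm_of_nonneg (by positivity)]
    gcongr

theorem QQ.congr {a b : V → W} (ha : QQ D a) (h : ∀ x ∈ D, a x = b x) : QQ D b := by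
  intro x hx k
  obtain ⟨a', h1, h2⟩ := ha x hx k
  refine ⟨a', ?_, h2⟩
  filter_upwards [h1, self_mem_nhdsWithin] with y hy hyD
  rw [← h y hyD, hy]

theorem contDiff_Xvec (n : ℕ) (j : Fin (2*n)) : ContDiff ℝ (⊤:ℕ∞) (Xvec n j) := by
  unfold Xvec
  split_ifs with h
  · fun_prop
  · fun_prop

theorem QQ.hDeriv {n : ℕ} {D : Set (Fin (2*n+1) → ℝ)} (hD : IsOpen D) (j : Fin (2*n))
    {a : (Fin (2*n+1) → ℝ) → W} (ha : QQ D a) : QQ D (hDeriv n j a) :=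
  (ha.fderiv hD).clm_apply (QQ.of_contDiff (contDiff_Xvec n j))

theorem QQ.XI {n : ℕ} {D : Set (Fin (2*n+1) → ℝ)} (hD : IsOpen D) (J : List (Fin (2*n)))
    {a : (Fin (2*n+1) → ℝ) → W} (ha : QQ D a) : QQ D (XI n J a) := by
  induction J with
  | nil => exact ha
  | cons j J ih => exact ih.hDeriv hD j

theorem eta0_Xvec (n : ℕ) (j : Fin (2*n)) (x : Fin (2*n+1) → ℝ) : eta0 n x (Xvec n j x) = 0 := by
  have hj := j.2
  unfold eta0 Xvec
  split_ifs with h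
  · rw [Finset.sum_eq_single (⟨j, h⟩ : Fin n)]
    · have : (2 * n ≠ (j:ℕ)) := by omega
      have h2 : ((j:ℕ) ≠ 2 * n) := by omega
      simp [Pi.single_apply, Fin.ext_iff, this, h2]
    · intro b _ hb
      have h1 : (b:ℕ) ≠ j := fun h => hb (Fin.ext h)
      have h2 : (b:ℕ) ≠ 2 * n := by omega
      simp [Pi.single_apply, Fin.ext_iff, h1, h2]
    · simp
  · have : (2 * n ≠ (j:ℕ)) := by omega
    simp only [Pi.single_apply, Fin.ext_iff, this, if_false, zero_sub, neg_eq_zero]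
    refine Finset.sum_eq_zero fun b _ => ?_
    have h1 : (b:ℕ) ≠ j := by omega
    simp [h1]

theorem horizontal_decomp (n : ℕ) (y v : Fin (2*n+1) → ℝ) (h : eta0 n y v = 0) :
    v = ∑ i : Fin (2*n), v i.castSucc • Xvec n i y := by
  have key : ∀ i : Fin (2*n), Xvec n i y = Pi.single i.castSucc 1 +
      (if h : (i:ℕ) < n then y ⟨n + i, by omega⟩ else 0) • Pi.single (Fin.last (2*n)) (1:ℝ) := by
    intro i
    unfold Xvec
    split_ifs with h
    · rfl
    · simp; rfl
  ext k
  simp only [key, Finset.sum_apply, Pi.smul_apply, Pi.add_apply, smul_eq_mul]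
  refine Fin.lastCases ?_ (fun k => ?_) k
  · have h1 : v (Fin.last (2*n)) = ∑ j : Fin n, y ⟨n + j, by have := j.2; omega⟩ *
        v ⟨j, by have := j.2; omega⟩ := by
      unfold eta0 at h; exact sub_eq_zero.1 h
    rw [h1]
    simp only [Pi.single_apply, Fin.ext_iff, Fin.val_last, Fin.val_castSucc]
    have h2 : ∀ x : Fin (2*n), (2 * n = (x:ℕ)) = False := fun x => by
      have := x.2; simp; omega
    simp only [h2, if_false, if_true, zero_add, mul_one]
    symm
    refine (Finset.sum_subset_zero_on_sdiff (s₁ := Finset.univ.map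
      (Fin.castLEEmb (show n ≤ 2 * n by omega))) (Finset.subset_univ _) ?_ (fun _ _ => rfl)).symm.trans ?_
    · intro i hi
      have : ¬ (i:ℕ) < n := by
        intro hlt
        simp at hi
        exact hi ⟨i, hlt⟩ (Fin.ext rfl)
      simp [this]
    · rw [Finset.sum_map]
      refine Finset.sum_congr rfl fun i _ => ?_
      simp
      exact mul_comm _ _
  · have h2 : (Fin.castSucc k = Fin.last (2*n)) = False := by
      simp [Fin.ext_iff]; have := k.2; omega
    simp [Pi.single_apply, h2]

/-- Operators that are sums of terms `a • (X_J f) ∘ F`. -/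
inductive FOp (n t : ℕ) (D : Set (Fin (2*n+1) → ℝ))
    (F : (Fin (2*n+1) → ℝ) → (Fin (2*n+1) → ℝ)) (W : Type*) [NormedAddCommGroup W]
    [NormedSpace ℝ W] :
    (((Fin (2*n+1) → ℝ) → W) → ((Fin (2*n+1) → ℝ) → W)) → Prop
  | zero : FOp n t D F W (fun _ _ => 0)
  | term (J : List (Fin (2*n))) (a : (Fin (2*n+1) → ℝ) → ℝ) (hJ : J.length ≤ t) (ha : QQ D a) :
      FOp n t D F W (fun f x => a x • XI n J f (F x))
  | add (L L' : ((Fin (2*n+1) → ℝ) → W) → ((Fin (2*n+1) → ℝ) → W))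
      (h : FOp n t D F W L) (h' : FOp n t D F W L') : FOp n t D F W (fun f x => L f x + L' f x)

theorem FOp.sum {n t : ℕ} {D : Set (Fin (2*n+1) → ℝ)}
    {F : (Fin (2*n+1) → ℝ) → (Fin (2*n+1) → ℝ)} {ι : Type*} (s : Finset ι)
    (L : ι → (((Fin (2*n+1) → ℝ) → W) → ((Fin (2*n+1) → ℝ) → W)))
    (h : ∀ i, FOp n t D F W (L i)) : FOp n t D F W (fun f x => ∑ i ∈ s, L i f x) := by
  classical
  induction s using Finset.induction_on with
  | empty => simpa using FOp.zero
  | insert i s hi ih =>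
    simp only [Finset.sum_insert hi]
    exact FOp.add _ _ (h i) ih

theorem hasFDerivAt_comp_term {n : ℕ} {D D' : Set (Fin (2*n+1) → ℝ)} (hD : IsOpen D)
    (hD' : IsOpen D')
    {F : (Fin (2*n+1) → ℝ) → (Fin (2*n+1) → ℝ)} (hF : QQ D F) (hm : Set.MapsTo F D D')
    {a : (Fin (2*n+1) → ℝ) → ℝ} (ha : QQ D a) {u : (Fin (2*n+1) → ℝ) → W} (hu : QQ D' u)
    {x : Fin (2*n+1) → ℝ} (hx : x ∈ D) :
    HasFDerivAt (fun x => a x • u (F x))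
      (a x • ((fderiv ℝ u (F x)).comp (fderiv ℝ F x)) + (fderiv ℝ a x).smulRight (u (F x))) x :=
  (ha.differentiableAt hD hx).hasFDerivAt.smul
    ((hu.differentiableAt hD' (hm hx)).hasFDerivAt.comp x (hF.differentiableAt hD hx).hasFDerivAt)

theorem FOp.differentiableAt {n t : ℕ} {D D' : Set (Fin (2*n+1) → ℝ)} (hD : IsOpen D)
    (hD' : IsOpen D')
    {F : (Fin (2*n+1) → ℝ) → (Fin (2*n+1) → ℝ)} (hF : QQ D F) (hm : Set.MapsTo F D D')
    {L : ((Fin (2*n+1) → ℝ) → W) → ((Fin (2*n+1) → ℝ) → W)} (hL : FOp n t D F W L)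
    {f : (Fin (2*n+1) → ℝ) → W} (hf : QQ D' f) {x : Fin (2*n+1) → ℝ} (hx : x ∈ D) :
    DifferentiableAt ℝ (L f) x := by
  induction hL with
  | zero => exact differentiableAt_const _
  | term J a hJ ha =>
    exact (hasFDerivAt_comp_term hD hD' hF hm ha (hf.XI hD' J) hx).differentiableAt
  | add L L' _ _ ih ih' => exact ih.add ih'

theorem FOp.hDeriv {n t : ℕ} {D D' : Set (Fin (2*n+1) → ℝ)} (hD : IsOpen D)
    (hD' : IsOpen D')
    {F : (Fin (2*n+1) → ℝ) → (Fin (2*n+1) → ℝ)} (hF : QQ D F) (hm : Set.MapsTo F D D')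
    (hFcontact : ∀ x ∈ D, ∃ lam : ℝ, ∀ v : Fin (2*n+1) → ℝ,
      eta0 n (F x) (_root_.fderiv ℝ F x v) = lam * eta0 n x v) (j : Fin (2*n))
    {L : ((Fin (2*n+1) → ℝ) → W) → ((Fin (2*n+1) → ℝ) → W)} (hL : FOp n t D F W L) :
    ∃ L', FOp n (t+1) D F W L' ∧ ∀ f, QQ D' f → ∀ x ∈ D, hDeriv n j (L f) x = L' f x := by
  induction hL with
  | zero => exact ⟨_, FOp.zero, fun f hf x hx => by simp [_root_.hDeriv]⟩
  | term J a hJ ha =>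
    refine ⟨_, FOp.add _ _ (FOp.term J (_root_.hDeriv n j a) (by omega) (ha.hDeriv hD j))
      (FOp.sum Finset.univ _ fun i : Fin (2*n) => FOp.term (i :: J)
        (fun x => a x • (_root_.fderiv ℝ F x (Xvec n j x)) i.castSucc) (by simpa using hJ)
        (ha.smul (QQ.clm_comp (ContinuousLinearMap.proj (R := ℝ) (φ := fun _ => ℝ) i.castSucc)
          (hF.hDeriv hD j)))), ?_⟩
    intro f hf x hx
    have h1 := (hasFDerivAt_comp_term hD hD' hF hm ha (hf.XI hD' J) hx).fderiv
    obtain ⟨lam, hlam⟩ := hFcontact x hx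
    have h2 := horizontal_decomp n (F x) _ ((hlam (Xvec n j x)).trans (by simp [eta0_Xvec]))
    simp only [_root_.hDeriv, _root_.XI]
    rw [h1]
    simp only [ContinuousLinearMap.add_apply, ContinuousLinearMap.smul_apply,
      ContinuousLinearMap.comp_apply, ContinuousLinearMap.smulRight_apply]
    rw [add_comm]
    congr 1
    conv_lhs => rw [h2]
    rw [map_sum, Finset.smul_sum]
    refine Finset.sum_congr rfl fun i _ => ?_
    rw [map_smul, smul_smul, smul_eq_mul]
  | add L L' hL hL' ih ih' =>
    obtain ⟨M, hM, h1⟩ := ih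
    obtain ⟨M', hM', h2⟩ := ih'
    refine ⟨_, FOp.add _ _ hM hM', fun f hf x hx => ?_⟩
    rw [← h1 f hf x hx, ← h2 f hf x hx]
    unfold _root_.hDeriv
    rw [fderiv_fun_add (hL.differentiableAt hD hD' hF hm hf hx)
      (hL'.differentiableAt hD hD' hF hm hf hx)]
    rfl

theorem FOp.XI {n : ℕ} {D D' : Set (Fin (2*n+1) → ℝ)} (hD : IsOpen D)
    (hD' : IsOpen D')
    {F : (Fin (2*n+1) → ℝ) → (Fin (2*n+1) → ℝ)} (hF : QQ D F) (hm : Set.MapsTo F D D')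
    (hFcontact : ∀ x ∈ D, ∃ lam : ℝ, ∀ v : Fin (2*n+1) → ℝ,
      eta0 n (F x) (_root_.fderiv ℝ F x v) = lam * eta0 n x v) (I : List (Fin (2*n))) :
    ∃ L', FOp n I.length D F W L' ∧ ∀ f, QQ D' f → ∀ x ∈ D, XI n I (f ∘ F) x = L' f x := by
  induction I with
  | nil => exact ⟨_, FOp.term [] (fun _ => 1) le_rfl (QQ.of_contDiff contDiff_const),
      fun f hf x hx => by simp [_root_.XI]⟩
  | cons j I ih =>
    obtain ⟨L, hL, h⟩ := ih
    obtain ⟨L', hL', h'⟩ := hL.hDeriv hD hD' hF hm hFcontact j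
    refine ⟨L', hL', fun f hf x hx => ?_⟩
    rw [← h' f hf x hx]
    simp only [_root_.XI, _root_.hDeriv]
    have : _root_.XI n I (f ∘ F) =ᶠ[𝓝 x] L f :=
      Filter.eventuallyEq_of_mem (hD.mem_nhds hx) (h f hf)
    rw [this.fderiv_eq]

theorem integral_comp_bound {n : ℕ} {D D' : Set (Fin (2*n+1) → ℝ)}
    (hD' : IsOpen D') (hDb' : IsBounded D')
    {F G : (Fin (2*n+1) → ℝ) → (Fin (2*n+1) → ℝ)} (hG : QQ D' G) (hb : Set.BijOn F D D')
    (hGF : ∀ x ∈ D, G (F x) = x) :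
    ∃ M : ℝ, 0 ≤ M ∧ ∀ u : (Fin (2*n+1) → ℝ) → W, QQ D' u →
      ∫ x in D, ‖u (F x)‖^2 ≤ M * ∫ y in D', ‖u y‖^2 := by
  obtain ⟨K, hK0, hK⟩ := (hG.fderiv hD').bounded hDb'
  haveI : ProperSpace ((Fin (2*n+1) → ℝ) →L[ℝ] (Fin (2*n+1) → ℝ)) := FiniteDimensional.proper ℝ _
  obtain ⟨M, hM⟩ := (isCompact_closedBall (0 : (Fin (2*n+1) → ℝ) →L[ℝ] (Fin (2*n+1) → ℝ))
    K).exists_bound_of_continuousOn (ContinuousLinearMap.continuous_det).continuousOn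
  have hM' : ∀ y ∈ D', |(fderiv ℝ G y).det| ≤ M := fun y hy => hM _ (by simpa using hK y hy)
  refine ⟨max M 0, le_max_right _ _, fun u hu => ?_⟩
  have hFG : ∀ y ∈ D', F (G y) = y := by
    intro y hy
    obtain ⟨x, hx, rfl⟩ := hb.surjOn hy
    rw [hGF x hx]
  have him : G '' D' = D := by
    rw [← hb.image_eq, Set.image_image]
    ext x
    constructor
    · rintro ⟨y, hy, rfl⟩
      simpa [hGF y hy] using hy
    · exact fun hx => ⟨x, hx, hGF x hx⟩
  have hinj : Set.InjOn G D' := fun y hy z hz h => by rw [← hFG y hy, h, hFG z hz]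
  have hcv := integral_image_eq_integral_abs_det_fderiv_smul volume hD'.measurableSet
    (fun y hy => (hG.differentiableAt hD' hy).hasFDerivAt.hasFDerivWithinAt) hinj
    (fun x => ‖u (F x)‖^2)
  rw [him] at hcv
  rw [hcv, ← integral_const_mul]
  refine integral_mono_of_nonneg (Eventually.of_forall fun y => by
    simp only [Pi.zero_apply, smul_eq_mul]; positivity)
    ((hu.integrableOn hD' hDb').const_mul _) ?_
  refine (ae_restrict_iff' hD'.measurableSet).2 (Eventually.of_forall fun y hy => ?_)
  simp only [smul_eq_mul, hFG y hy]
  gcongr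
  exact (hM' y hy).trans (le_max_left _ _)

theorem fsNormSq_nonneg (n : ℕ) (D : Set (Fin (2*n+1) → ℝ)) (s : ℕ)
    (f : (Fin (2*n+1) → ℝ) → W) : 0 ≤ fsNormSq n D s f :=
  Finset.sum_nonneg fun _ _ => Finset.sum_nonneg fun _ _ => integral_nonneg fun _ => by positivity

theorem le_fsNormSq (n : ℕ) (D : Set (Fin (2*n+1) → ℝ)) (s : ℕ)
    (f : (Fin (2*n+1) → ℝ) → W) (J : List (Fin (2*n))) (hJ : J.length ≤ s) :
    ∫ x in D, ‖XI n J f x‖^2 ≤ fsNormSq n D s f := by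
  have h1 : ∫ x in D, ‖XI n J f x‖^2 ≤ ∑ I : Fin J.length → Fin (2*n),
      ∫ x in D, ‖XI n (List.ofFn I) f x‖^2 := by
    have := Finset.single_le_sum (f := fun I : Fin J.length → Fin (2*n) =>
      ∫ x in D, ‖XI n (List.ofFn I) f x‖^2) (fun I _ => integral_nonneg fun _ => by positivity)
      (Finset.mem_univ J.get)
    simpa using this
  refine h1.trans ?_
  exact Finset.single_le_sum (f := fun t => ∑ I : Fin t → Fin (2*n),
      ∫ x in D, ‖XI n (List.ofFn I) f x‖^2) (fun t _ => Finset.sum_nonneg fun I _ =>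
        integral_nonneg fun _ => by positivity) (Finset.mem_range.2 (by omega))

theorem QQ.comp {n : ℕ} {D D' : Set (Fin (2*n+1) → ℝ)}
    {F : (Fin (2*n+1) → ℝ) → (Fin (2*n+1) → ℝ)} (hF : ContDiffOn ℝ (⊤:ℕ∞) F (closure D))
    (hm : Set.MapsTo F D D') (hm' : Set.MapsTo F (closure D) (closure D'))
    {u : (Fin (2*n+1) → ℝ) → W} (hu : QQ D' u) : QQ D (fun x => u (F x)) := by
  intro x hx k
  obtain ⟨b, h1, h2⟩ := hu (F x) (hm' hx) k
  have hFx : ContDiffWithinAt ℝ k F D x :=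
    ((hF x hx).mono subset_closure).of_le (by exact_mod_cast le_top)
  refine ⟨fun x => b (F x), ?_, h2.comp x hFx hm⟩
  exact (hFx.continuousWithinAt.tendsto_nhdsWithin hm).eventually h1

theorem FOp.bound {n s : ℕ} {D D' : Set (Fin (2*n+1) → ℝ)} (hD : IsOpen D) (hDb : IsBounded D)
    (hD' : IsOpen D') (hDb' : IsBounded D')
    {F G : (Fin (2*n+1) → ℝ) → (Fin (2*n+1) → ℝ)} (hG : QQ D' G) (hb : Set.BijOn F D D')
    (hF : ContDiffOn ℝ (⊤:ℕ∞) F (closure D)) (hm' : Set.MapsTo F (closure D) (closure D'))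
    (hGF : ∀ x ∈ D, G (F x) = x)
    {L : ((Fin (2*n+1) → ℝ) → W) → ((Fin (2*n+1) → ℝ) → W)} (hL : FOp n s D F W L) :
    (∀ f, QQ D' f → QQ D (L f)) ∧
    ∃ C : ℝ, 0 ≤ C ∧ ∀ f, QQ D' f → ∫ x in D, ‖L f x‖^2 ≤ C * fsNormSq n D' s f := by
  induction hL with
  | zero => exact ⟨fun f hf => QQ.of_contDiff contDiff_const, 0, le_rfl, fun f hf => by simp⟩
  | term J a hJ ha =>
    have hq : ∀ f : (Fin (2*n+1) → ℝ) → W, QQ D' f → QQ D (fun x => _root_.XI n J f (F x)) :=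
      fun f hf => QQ.comp hF hb.mapsTo hm' (hf.XI hD' J)
    refine ⟨fun f hf => ha.smul (hq f hf), ?_⟩
    obtain ⟨A, hA0, hA⟩ := ha.bounded hDb
    obtain ⟨M, hM0, hM⟩ := integral_comp_bound (W := W) hD' hDb' hG hb hGF
    refine ⟨A^2 * M, by positivity, fun f hf => ?_⟩
    calc ∫ x in D, ‖a x • _root_.XI n J f (F x)‖^2
        ≤ ∫ x in D, A^2 * ‖_root_.XI n J f (F x)‖^2 := by
          refine setIntegral_mono_on ((ha.smul (hq f hf)).integrableOn hD hDb)
            (((hq f hf).integrableOn hD hDb).const_mul _) hD.measurableSet fun x hx => ?_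
          rw [norm_smul, mul_pow]
          gcongr
          exact hA x hx
      _ = A^2 * ∫ x in D, ‖_root_.XI n J f (F x)‖^2 := integral_const_mul _ _
      _ ≤ A^2 * (M * ∫ x in D', ‖_root_.XI n J f x‖^2) := by
          gcongr
          exact hM _ (hf.XI hD' J)
      _ ≤ A^2 * (M * fsNormSq n D' s f) := by
          gcongr
          exact le_fsNormSq n D' s f J hJ
      _ = _ := by ring
  | add L L' hL hL' ih ih' =>
    obtain ⟨h1, C, hC0, hC⟩ := ih
    obtain ⟨h2, C', hC0', hC'⟩ := ih'
    refine ⟨fun f hf => (h1 f hf).add (h2 f hf), 2 * C + 2 * C', by positivity, fun f hf => ?_⟩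
    have i1 := (h1 f hf).integrableOn hD hDb
    have i2 := (h2 f hf).integrableOn hD hDb
    calc ∫ x in D, ‖L f x + L' f x‖^2
        ≤ ∫ x in D, (2 * ‖L f x‖^2 + 2 * ‖L' f x‖^2) := by
          refine setIntegral_mono_on (((h1 f hf).add (h2 f hf)).integrableOn hD hDb)
            ((i1.const_mul 2).add (i2.const_mul 2)) hD.measurableSet fun x hx => ?_
          have := norm_add_le (L f x) (L' f x)
          have h3 : ‖L f x + L' f x‖^2 ≤ (‖L f x‖ + ‖L' f x‖)^2 := by gcongr
          nlinarith [sq_nonneg (‖L f x‖ - ‖L' f x‖)]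
      _ = 2 * (∫ x in D, ‖L f x‖^2) + 2 * ∫ x in D, ‖L' f x‖^2 := by
          rw [integral_add (i1.const_mul 2) (i2.const_mul 2), integral_const_mul,
            integral_const_mul]
      _ ≤ _ := by linarith [hC f hf, hC' f hf]

theorem FOp.mono {n t s : ℕ} (hts : t ≤ s) {D : Set (Fin (2*n+1) → ℝ)}
    {F : (Fin (2*n+1) → ℝ) → (Fin (2*n+1) → ℝ)}
    {L : ((Fin (2*n+1) → ℝ) → W) → ((Fin (2*n+1) → ℝ) → W)} (hL : FOp n t D F W L) :
    FOp n s D F W L := by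
  induction hL with
  | zero => exact FOp.zero
  | term J a hJ ha => exact FOp.term J a (hJ.trans hts) ha
  | add L L' _ _ ih ih' => exact FOp.add _ _ ih ih'

end helpers

/-- composition with a smooth contact diffeomorphism `F : cl D → cl D'`
is bounded on Folland–Stein spaces: `‖f ∘ F‖_{D,s} ≤ C ‖f‖_{D',s}`. -/
theorem statement8 (n m : ℕ) (hn : 1 ≤ n)
    (D D' : Set (Fin (2*n+1) → ℝ)) (hD : IsOpen D) (hDb : IsBounded D)
    (hD' : IsOpen D') (hD'b : IsBounded D')
    (F : (Fin (2*n+1) → ℝ) → (Fin (2*n+1) → ℝ))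
    (hFsmooth : ContDiffOn ℝ (⊤:ℕ∞) F (closure D))
    (hFbij : Set.BijOn F (closure D) (closure D'))
    (hFbij' : Set.BijOn F D D')
    (hFinv : ∃ G : (Fin (2*n+1) → ℝ) → (Fin (2*n+1) → ℝ),
      ContDiffOn ℝ (⊤:ℕ∞) G (closure D') ∧ ∀ x ∈ closure D, G (F x) = x)
    (hFcontact : ∀ x ∈ D, ∃ lam : ℝ, ∀ v : Fin (2*n+1) → ℝ,
      eta0 n (F x) (fderiv ℝ F x v) = lam * eta0 n x v)
    (s : ℕ) :
    ∃ C > (0:ℝ), ∀ f : (Fin (2*n+1) → ℝ) → (Fin m → ℝ),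
      ContDiffOn ℝ (⊤:ℕ∞) f (closure D') →
      fsNorm n D s (f ∘ F) ≤ C * fsNorm n D' s f := by
  obtain ⟨G, hGs, hGF⟩ := hFinv
  have hG : QQ D' G := QQ.of_contDiffOn hGs
  have hF : QQ D F := QQ.of_contDiffOn hFsmooth
  have hm := hFbij'.mapsTo
  have key : ∀ t : ℕ, t ∈ Finset.range (s+1) → ∀ I : Fin t → Fin (2*n), ∃ C : ℝ, 0 ≤ C ∧
      ∀ f : (Fin (2*n+1) → ℝ) → (Fin m → ℝ), QQ D' f →
      ∫ x in D, ‖XI n (List.ofFn I) (f ∘ F) x‖^2 ≤ C * fsNormSq n D' s f := by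
    intro t ht I
    obtain ⟨L, hL, h⟩ := FOp.XI (W := Fin m → ℝ) hD hD' hF hm hFcontact (List.ofFn I)
    have hL' := hL.mono (s := s) (by simp at ht ⊢; omega)
    obtain ⟨-, C, hC0, hC⟩ := hL'.bound hD hDb hD' hD'b hG hFbij' hFsmooth hFbij.mapsTo
      (fun x hx => hGF x (subset_closure hx))
    refine ⟨C, hC0, fun f hf => ?_⟩
    rw [setIntegral_congr_fun (g := fun x => ‖L f x‖^2) hD.measurableSet
      (fun x hx => by simp only [h f hf x hx])]
    exact hC f hf
  choose! C hC0 hC using key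
  have hC2 : 0 ≤ ∑ t ∈ Finset.range (s+1), ∑ I : Fin t → Fin (2*n), C t I :=
    Finset.sum_nonneg fun t ht => Finset.sum_nonneg fun I _ => hC0 t ht I
  refine ⟨Real.sqrt (1 + ∑ t ∈ Finset.range (s+1), ∑ I : Fin t → Fin (2*n), C t I),
    Real.sqrt_pos.2 (by linarith), fun f hf => ?_⟩
  have hf' : QQ D' f := QQ.of_contDiffOn hf
  unfold fsNorm
  rw [← Real.sqrt_mul (by linarith)]
  refine Real.sqrt_le_sqrt ?_
  have h0 := fsNormSq_nonneg n D' s f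
  calc fsNormSq n D s (f ∘ F)
      ≤ ∑ t ∈ Finset.range (s+1), ∑ I : Fin t → Fin (2*n), C t I * fsNormSq n D' s f :=
        Finset.sum_le_sum fun t ht => Finset.sum_le_sum fun I _ => hC t ht I f hf'
    _ = (∑ t ∈ Finset.range (s+1), ∑ I : Fin t → Fin (2*n), C t I) * fsNormSq n D' s f := by
        simp only [Finset.sum_mul]
    _ ≤ _ := by nlinarith

end
end

section
/- Let D ⊂ ℝ^{2n+1} be a bounded open set and s ≥ 0 an integer. Then there exists a constant C > 0 such that for every smooth contact vector field X : cl(D) → ℝ^{2n+1}, the generating function g = η₀(X), given by g(x) = X^{2n+1}(x) − Σ_{j=1}^n x^{n+j} X^j(x), satisfies ‖g‖_{D,s+1} ≤ C Σ_{i=1}^{2n+1} ‖X^i‖_{D,s}. In particular, if the components of a contact vector field have finite Folland–Stein norm of order s, then its generating function has finite Folland–Stein norm of order s + 1 (a gain of one derivative). -/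
open MeasureTheory Bornology

noncomputable section

variable {E : Type*} [NormedAddCommGroup E] [NormedSpace ℝ E]

lemma XI_append13 (n : ℕ) (I : List (Fin (2*n))) (j : Fin (2*n)) (f : (Fin (2*n+1) → ℝ) → ℝ) :
    XI n (I ++ [j]) f = XI n I (hDeriv n j f) := by
  induction I with
  | nil => rfl
  | cons a I ih => simp only [List.cons_append, XI, ih]

lemma XI_congr13 (n : ℕ) (D : Set (Fin (2*n+1) → ℝ)) (hD : IsOpen D)
    (f h : (Fin (2*n+1) → ℝ) → ℝ) (c : ℝ) (hf : ∀ x ∈ D, f x = c • h x)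
    (I : List (Fin (2*n))) : ∀ x ∈ D, XI n I f x = c • XI n I h x := by
  induction I with
  | nil => exact hf
  | cons a I ih =>
    intro x hx
    simp only [XI, hDeriv]
    have : XI n I f =ᶠ[nhds x] (c • XI n I h) := by
      filter_upwards [hD.mem_nhds hx] with y hy using ih y hy
    rw [this.fderiv_eq, fderiv_const_smul_field]
    rfl

lemma dEta0_Xvec13 (n : ℕ) (j : Fin (2*n)) :
    ∃ c : ℝ, ∃ i : Fin (2*n+1), c ^ 2 = 1 ∧
      ∀ u x : Fin (2*n+1) → ℝ, dEta0 n u (Xvec n j x) = - (c * u i) := by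
  by_cases h : (j : ℕ) < n
  · refine ⟨1, ⟨n + j, by omega⟩, by norm_num, fun u x => ?_⟩
    unfold dEta0
    rw [Finset.sum_eq_single (⟨j, h⟩ : Fin n)]
    · simp [Xvec, h, Pi.single_apply, Fin.ext_iff]
      have h1 : ¬ (n + (j:ℕ) = j) := by omega
      have h2 : ¬ (n + (j:ℕ) = 2 * n) := by omega
      have h3 : ¬ ((j:ℕ) = 2 * n) := by omega
      simp [h2, h3]
      omega
    · intro b _ hb
      have hb' : ¬ ((b:ℕ) = j) := fun e => hb (Fin.ext e)
      have h1 : ¬ (n + (b:ℕ) = j) := by omega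
      have h2 : ¬ (n + (b:ℕ) = 2 * n) := by omega
      have h3 : ¬ ((b:ℕ) = 2 * n) := by omega
      simp [Xvec, h, Pi.single_apply, Fin.ext_iff, h1, h2, h3, hb']
    · simp
  · have hj := j.2
    refine ⟨-1, ⟨j - n, by omega⟩, by norm_num, fun u x => ?_⟩
    unfold dEta0
    rw [Finset.sum_eq_single (⟨j - n, by omega⟩ : Fin n)]
    · have h1 : n + ((j:ℕ) - n) = j := by omega
      have h2 : ¬ ((j:ℕ) - n = j) := by omega
      simp [Xvec, h, Pi.single_apply, Fin.ext_iff, h1, h2]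
    · intro b _ hb
      have hb' : ¬ (n + (b:ℕ) = j) := fun e => hb (Fin.ext (by simp; omega))
      have h1 : ¬ ((b:ℕ) = j) := by omega
      simp [Xvec, h, Pi.single_apply, Fin.ext_iff, h1, hb']
    · simp

lemma fsNormSq_nonneg13 (n : ℕ) (D : Set (Fin (2*n+1) → ℝ)) (s : ℕ)
    (f : (Fin (2*n+1) → ℝ) → ℝ) : 0 ≤ fsNormSq n D s f :=
  Finset.sum_nonneg fun _ _ => Finset.sum_nonneg fun _ _ =>
    integral_nonneg fun _ => by positivity

lemma term_le13 (n : ℕ) (D : Set (Fin (2*n+1) → ℝ)) (s t : ℕ) (ht : t < s + 1)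
    (f : (Fin (2*n+1) → ℝ) → ℝ) (I : Fin t → Fin (2*n)) :
    ∫ x in D, ‖XI n (List.ofFn I) f x‖^2 ≤ fsNormSq n D s f := by
  have h0 : ∀ t, ∀ I : Fin t → Fin (2*n), 0 ≤ ∫ x in D, ‖XI n (List.ofFn I) f x‖^2 :=
    fun t I => integral_nonneg fun _ => by positivity
  refine le_trans (Finset.single_le_sum (fun I _ => h0 t I) (Finset.mem_univ I)) ?_
  exact Finset.single_le_sum
    (f := fun t => ∑ I : Fin t → Fin (2*n), ∫ x in D, ‖XI n (List.ofFn I) f x‖^2)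
    (fun t _ => Finset.sum_nonneg fun I _ => h0 t I) (Finset.mem_range.2 ht)

lemma eta0_sq_le13 (n : ℕ) (R : ℝ) (hR : 0 ≤ R) (x v : Fin (2*n+1) → ℝ) (hx : ‖x‖ ≤ R) :
    ‖eta0 n x v‖^2 ≤ (1 + n * R)^2 * ∑ i, ‖v i‖^2 := by
  have hv : ∀ i, ‖v i‖ ≤ √(∑ i, ‖v i‖^2) := fun i => by
    apply Real.le_sqrt_of_sq_le
    exact Finset.single_le_sum (f := fun i => ‖v i‖^2) (fun _ _ => by positivity)
      (Finset.mem_univ i)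
  have key : ‖eta0 n x v‖ ≤ (1 + n * R) * √(∑ i, ‖v i‖^2) := by
    unfold eta0
    refine (norm_sub_le _ _).trans ?_
    rw [add_mul, one_mul]
    refine add_le_add (hv _) ((norm_sum_le _ _).trans ?_)
    refine (Finset.sum_le_card_nsmul _ _ (R * √(∑ i, ‖v i‖^2)) fun j _ => ?_).trans ?_
    · rw [norm_mul]
      exact mul_le_mul ((norm_le_pi_norm x _).trans hx) (hv _) (norm_nonneg _) hR
    · simp [mul_assoc]
  calc ‖eta0 n x v‖^2 ≤ ((1 + n * R) * √(∑ i, ‖v i‖^2))^2 := by gcongr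
    _ = _ := by rw [mul_pow, Real.sq_sqrt (Finset.sum_nonneg fun _ _ => by positivity)]

/-- the generating function `g = η₀(X)` of a smooth contact vector
field gains one derivative: `‖g‖_{D,s+1} ≤ C Σ_i ‖X^i‖_{D,s}`. -/
theorem statement13 (n s : ℕ) (hn : 1 ≤ n)
    (D : Set (Fin (2*n+1) → ℝ)) (hD : IsOpen D) (hDb : IsBounded D) :
    ∃ C > (0:ℝ), ∀ X : (Fin (2*n+1) → ℝ) → (Fin (2*n+1) → ℝ),
      ContDiffOn ℝ (⊤:ℕ∞) X (closure D) → IsContactVF n D X →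
      fsNorm n D (s+1) (fun x => eta0 n x (X x)) ≤
        C * ∑ i : Fin (2*n+1), fsNorm n D s (fun x => X x i) := by
  obtain ⟨R0, hR0⟩ := hDb.exists_norm_le
  set R := max R0 0 with hRdef
  have hR : ∀ x ∈ D, ‖x‖ ≤ R := fun x hx => (hR0 x hx).trans (le_max_left _ _)
  have hRn : 0 ≤ R := le_max_right _ _
  set A : ℝ := (1 + n * R)^2 with hA
  set B : ℝ := ∑ t ∈ Finset.range (s+1), ∑ I : Fin (t+1) → Fin (2*n), (1:ℝ) with hB
  have hA0 : 0 ≤ A := by positivity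
  have hB0 : 0 ≤ B := Finset.sum_nonneg fun _ _ => Finset.sum_nonneg fun _ _ => zero_le_one
  refine ⟨√(B + A) + 1, add_pos_of_nonneg_of_pos (Real.sqrt_nonneg _) one_pos, fun X hX hc => ?_⟩
  set S : ℝ := ∑ i, fsNormSq n D s (fun x => X x i) with hS
  have hSi : ∀ i, fsNormSq n D s (fun x => X x i) ≤ S := fun i =>
    Finset.single_le_sum (f := fun i => fsNormSq n D s (fun x => X x i))
      (fun _ _ => fsNormSq_nonneg13 _ _ _ _) (Finset.mem_univ i)
  have hS0 : 0 ≤ S := Finset.sum_nonneg fun _ _ => fsNormSq_nonneg13 _ _ _ _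
  have hhigh : ∀ t ∈ Finset.range (s+1), ∀ I : Fin (t+1) → Fin (2*n),
      ∫ x in D, ‖XI n (List.ofFn I) (fun x => eta0 n x (X x)) x‖^2 ≤ 1 * S := by
    intro t ht I
    rw [List.ofFn_succ', List.concat_eq_append, XI_append13]
    obtain ⟨c, i, hc1, hci⟩ := dEta0_Xvec13 n (I (Fin.last t))
    have e : ∀ x ∈ D, hDeriv n (I (Fin.last t)) (fun x => eta0 n x (X x)) x = c • X x i := by
      intro x hx
      have := hc (I (Fin.last t)) x hx
      rw [hci] at this
      rw [smul_eq_mul]; linarith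
    rw [one_mul]
    refine le_trans (le_of_eq ?_) ((term_le13 n D s t (Finset.mem_range.1 ht)
      (fun x => X x i) (fun k => I k.castSucc)).trans (hSi i))
    refine setIntegral_congr_fun hD.measurableSet fun x hx => ?_
    simp only [XI_congr13 n D hD _ (fun x => X x i) c e _ x hx]
    rw [norm_smul, mul_pow, Real.norm_eq_abs c, sq_abs, hc1, one_mul]
  have hlow : ∫ x in D, ‖eta0 n x (X x)‖^2 ≤ A * S := by
    have hint : ∀ i, IntegrableOn (fun x => ‖X x i‖^2) D := fun i => by
      have hcpt : IsCompact (closure D) := hDb.isCompact_closure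
      have hcont : ContinuousOn (fun x => ‖X x i‖^2) (closure D) :=
        (((continuous_apply i).comp_continuousOn hX.continuousOn).norm).pow 2
      exact (hcont.integrableOn_compact hcpt).mono_set subset_closure
    calc ∫ x in D, ‖eta0 n x (X x)‖^2 ≤ ∫ x in D, A * ∑ i, ‖X x i‖^2 := by
          refine integral_mono_of_nonneg (Filter.Eventually.of_forall fun x => by positivity)
            ((integrable_finsetSum _ fun i _ => hint i).const_mul A) ?_
          filter_upwards [ae_restrict_mem hD.measurableSet] with x hx
          exact eta0_sq_le13 n R hRn x (X x) (hR x hx)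
      _ = A * ∑ i, ∫ x in D, ‖X x i‖^2 := by
          rw [integral_const_mul, integral_finsetSum _ fun i _ => hint i]
      _ ≤ A * S := by
          refine mul_le_mul_of_nonneg_left (Finset.sum_le_sum fun i _ => ?_) hA0
          exact term_le13 n D s 0 (by omega) (fun x => X x i) Fin.elim0
  have htot : fsNormSq n D (s+1) (fun x => eta0 n x (X x)) ≤ (B + A) * S := by
    unfold fsNormSq
    rw [Finset.sum_range_succ', add_mul, hB, Finset.sum_mul]
    refine add_le_add (Finset.sum_le_sum fun t ht => ?_) ?_
    · rw [Finset.sum_mul]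
      exact Finset.sum_le_sum fun I _ => hhigh t ht I
    · simpa [XI] using hlow
  have hsum : √S ≤ ∑ i : Fin (2*n+1), fsNorm n D s (fun x => X x i) := by
    have hnn : ∀ i ∈ Finset.univ, 0 ≤ fsNorm n D s (fun x => X x i) :=
      fun i _ => Real.sqrt_nonneg _
    rw [Real.sqrt_le_left (Finset.sum_nonneg hnn)]
    refine le_trans (le_of_eq ?_) (Finset.sum_sq_le_sq_sum_of_nonneg hnn)
    exact Finset.sum_congr rfl fun i _ => (Real.sq_sqrt (fsNormSq_nonneg13 _ _ _ _)).symm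
  calc fsNorm n D (s+1) (fun x => eta0 n x (X x)) ≤ √((B + A) * S) := Real.sqrt_le_sqrt htot
    _ = √(B + A) * √S := Real.sqrt_mul (add_nonneg hB0 hA0) _
    _ ≤ (√(B + A) + 1) * √S :=
      mul_le_mul_of_nonneg_right (le_add_of_nonneg_right zero_le_one) (Real.sqrt_nonneg _)
    _ ≤ _ := mul_le_mul_of_nonneg_left hsum
      (add_nonneg (Real.sqrt_nonneg _) zero_le_one)

end
end
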